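/- arXiv:2410.18947 — 3 statements merged into one kernel-verified Lean document; each statement's English description precedes it below -/
import Mathlib

section
/- Fundamental Lemma, left version: let A_L : d_L → Matrix P Q ℂ and A_R : d_R → Matrix Q' S ℂ be injective MPS tensors, B : d_B → Matrix Q Q' ℂ a right-injective MPS tensor, and X : d_X → Matrix S P ℂ a family of matrices with X a ≠ 0 for some a. Let U_L : Matrix d_L d_L ℂ and L : Matrix d_B d_B ℂ be invertible matrices, and define Ψ(i,j,k,a) := trace (A_L i * B j * A_R k * X a). If ∑_{i'} ∑_{j'} (U_L i i') * (L j j') * Ψ(i',j',k,a) = Ψ(i,j,k,a) for all i, j, k, a, then there exists a unique matrix M : Matrix Q Q ℂ such that M * B j = ∑_{j'} (L j j') • B j' for all j : d_B, and this M is invertible (so writing M = V_L⁻¹, there is a unique invertible V_L with ∑_{j'} (L j j') • B j' = V_L⁻¹ * B j for all j). -/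
open Matrix

/-- Fundamental Lemma, left version: given injective MPS tensors `A_L`, `A_R`,
a right-injective tensor `B`, a nonzero closure tensor `X`, and invertible
`U_L`, `L` with the symmetry property for the three-site state `Ψ`, there is
a unique matrix `M` with `M * B j = ∑ j', L j j' • B j'` for all `j`, and this
`M` is invertible. -/
theorem fundamental_lemma_left
    {dL dB dR dX P Q Q' S : Type*}
    [Fintype dL] [Fintype dB] [Fintype dR] [Fintype dX]
    [Fintype P] [Fintype Q] [Fintype Q'] [Fintype S]
    [DecidableEq Q] [DecidableEq dL] [DecidableEq dB]
    (AL : dL → Matrix P Q ℂ) (AR : dR → Matrix Q' S ℂ)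
    (B : dB → Matrix Q Q' ℂ) (X : dX → Matrix S P ℂ)
    (hAL : Function.Injective fun Y : Matrix Q P ℂ => fun i : dL => (AL i * Y).trace)
    (hAR : Function.Injective fun Y : Matrix S Q' ℂ => fun k : dR => (AR k * Y).trace)
    (hB : ∀ w : Q → ℂ, (∀ j, w ᵥ* B j = 0) → w = 0)
    (hX : ∃ a, X a ≠ 0)
    (UL : Matrix dL dL ℂ) (L : Matrix dB dB ℂ)
    (hUL : IsUnit UL) (hL : IsUnit L)
    (hsym : ∀ i j k a,
      (∑ i', ∑ j', UL i i' * L j j' * (AL i' * B j' * AR k * X a).trace) =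
        (AL i * B j * AR k * X a).trace) :
    ∃ M : Matrix Q Q ℂ,
      (∀ j, M * B j = ∑ j', L j j' • B j') ∧ IsUnit M ∧
        ∀ M' : Matrix Q Q ℂ, (∀ j, M' * B j = ∑ j', L j j' • B j') → M' = M := by
  classical
  obtain ⟨a, ha⟩ := hX
  obtain ⟨s, p0, hsp⟩ : ∃ s p, X a s p ≠ 0 := by
    by_contra! h
    exact ha (by ext s p; exact h s p)
  set LB : dB → Matrix Q Q' ℂ := fun j => ∑ j', L j j' • B j' with hLB
  have h1 : ∀ i j, (∑ i', UL i i' • (X a * AL i' * LB j)) = X a * AL i * B j := by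
    intro i j
    apply hAR
    funext k
    have key : ∀ i j, (AR k * (X a * AL i * B j)).trace
        = (AL i * B j * AR k * X a).trace := by
      intro i j
      rw [Matrix.mul_assoc (AL i * B j), Matrix.trace_mul_comm (AL i * B j)]
      simp only [Matrix.mul_assoc]
    show (AR k * (∑ i', UL i i' • (X a * AL i' * LB j))).trace
      = (AR k * (X a * AL i * B j)).trace
    rw [key, ← hsym i j k a]
    simp only [hLB, Matrix.mul_sum, Matrix.trace_sum, Matrix.mul_smul, Matrix.trace_smul,
      key, Finset.smul_sum, smul_eq_mul, mul_assoc]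
  set R : Matrix dL Q ℂ := Matrix.of fun i q => (X a * AL i) s q with hR
  have hRB : ∀ (i : dL) (T : Matrix Q Q' ℂ) (q : Q'), (R * T) i q = (X a * AL i * T) s q := by
    intro i T q
    simp only [hR, Matrix.mul_apply, Matrix.of_apply]
  have h2 : ∀ j, UL * (R * LB j) = R * B j := by
    intro j
    ext i q
    rw [hRB, ← h1 i j, Matrix.mul_apply, Matrix.sum_apply]
    simp only [hRB, Matrix.smul_apply, smul_eq_mul]
  have hinj : Function.Injective R.mulVec := by
    have h0 : ∀ v : Q → ℂ, R *ᵥ v = 0 → v = 0 := by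
      intro v hv
      have hz : Matrix.vecMulVec v (X a s) = 0 := by
        apply hAL
        funext i
        have := congrFun hv i
        simp only [Matrix.mulVec, dotProduct, hR, Matrix.of_apply, Matrix.mul_apply,
          Pi.zero_apply, Finset.sum_mul] at this
        show (AL i * Matrix.vecMulVec v (X a s)).trace = (AL i * (0 : Matrix Q P ℂ)).trace
        rw [Matrix.mul_zero, Matrix.trace_zero]
        simp only [Matrix.trace, Matrix.diag,
          Matrix.mul_apply, Matrix.vecMulVec_apply]
        rw [← this, Finset.sum_comm]
        refine Finset.sum_congr rfl fun _ _ => Finset.sum_congr rfl fun _ _ => by ring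
      funext q
      have := congrFun (congrFun hz q) p0
      simp only [Matrix.vecMulVec_apply, Matrix.zero_apply, mul_eq_zero] at this
      exact this.resolve_right hsp
    intro v w hvw
    have := h0 (v - w) (by rw [Matrix.mulVec_sub]; exact sub_eq_zero.mpr hvw)
    exact sub_eq_zero.mp this
  obtain ⟨C, hC⟩ : ∃ C : Matrix Q dL ℂ, C * R = 1 := by
    obtain ⟨g, hg⟩ := LinearMap.exists_leftInverse_of_injective R.toLin'
      (LinearMap.ker_eq_bot.mpr (by
        intro v w h
        exact hinj (by simpa only [Matrix.toLin'_apply] using h)))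
    refine ⟨LinearMap.toMatrix' g, ?_⟩
    have := congrArg LinearMap.toMatrix' hg
    rwa [LinearMap.toMatrix'_comp, LinearMap.toMatrix'_toLin', LinearMap.toMatrix'_id] at this
  have hUdet := (Matrix.isUnit_iff_isUnit_det _).mp hUL
  have hLdet := (Matrix.isUnit_iff_isUnit_det _).mp hL
  have hM : ∀ j, (C * UL⁻¹ * R) * B j = LB j := by
    intro j
    rw [Matrix.mul_assoc, ← h2 j, Matrix.mul_assoc, Matrix.nonsing_inv_mul_cancel_left _ _ hUdet,
      ← Matrix.mul_assoc, hC, Matrix.one_mul]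
  refine ⟨C * UL⁻¹ * R, hM, ?_, ?_⟩
  · rw [← Matrix.vecMul_injective_iff_isUnit]
    have h0 : ∀ w : Q → ℂ, w ᵥ* (C * UL⁻¹ * R) = 0 → w = 0 := by
      intro w hw
      have hw2 : ∀ j, w ᵥ* LB j = 0 := by
        intro j
        rw [← hM j, ← Matrix.vecMul_vecMul, hw, Matrix.zero_vecMul]
      apply hB
      intro j
      have hBj : B j = ∑ k, L⁻¹ j k • LB k := by
        simp only [hLB, Finset.smul_sum, smul_smul]
        rw [Finset.sum_comm]
        simp only [← Finset.sum_smul, ← Matrix.mul_apply, Matrix.nonsing_inv_mul _ hLdet,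
          Matrix.one_apply, ite_smul, one_smul, zero_smul]
        simp
      rw [hBj, Matrix.vecMul_sum]
      simp [Matrix.vecMul_smul, hw2]
    intro v w hvw
    have := h0 (v - w) (by rw [Matrix.sub_vecMul]; exact sub_eq_zero.mpr hvw)
    exact sub_eq_zero.mp this
  · intro M' hM'
    have hz : ∀ q, (M' - C * UL⁻¹ * R) q = 0 := by
      intro q
      apply hB
      intro j
      have : (M' - C * UL⁻¹ * R) * B j = 0 := by
        rw [Matrix.sub_mul, hM j, hM' j, sub_self]
      funext q'
      exact congrFun (congrFun this q) q'
    exact sub_eq_zero.mp (by ext q q'; exact congrFun (hz q) q')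
end

section
/- Fundamental Lemma, right version: let A_L : d_L → Matrix P Q ℂ and A_R : d_R → Matrix Q' S ℂ be injective MPS tensors, B : d_B → Matrix Q Q' ℂ a left-injective MPS tensor, and X : d_X → Matrix S P ℂ a family of matrices with X a ≠ 0 for some a. Let U_R : Matrix d_R d_R ℂ and R : Matrix d_B d_B ℂ be invertible matrices, and define Ψ(i,j,k,a) := trace (A_L i * B j * A_R k * X a). If ∑_{j'} ∑_{k'} (R j j') * (U_R k k') * Ψ(i,j',k',a) = Ψ(i,j,k,a) for all i, j, k, a, then there exists a unique matrix V_R : Matrix Q' Q' ℂ such that ∑_{j'} (R j j') • B j' = B j * V_R for all j : d_B, and this V_R is invertible. -/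
open Matrix

theorem aux_span {dR Q' S : Type*} [Fintype dR] [Fintype Q'] [Fintype S]
    [DecidableEq Q'] [DecidableEq S] (AR : dR → Matrix Q' S ℂ)
    (hAR : Function.Injective fun Y : Matrix S Q' ℂ => fun k : dR => (AR k * Y).trace)
    (M : Matrix Q' S ℂ) : ∃ c : dR → ℂ, ∑ k, c k • AR k = M := by
  have htop : Submodule.span ℂ (Set.range AR) = ⊤ := by
    by_contra hne
    obtain ⟨f, hf, hle⟩ := Submodule.exists_le_ker_of_lt_top _ (lt_top_iff_ne_top.mpr hne)
    apply hf
    have key : ∀ M : Matrix Q' S ℂ,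
        f M = (M * (Matrix.of fun s q => f (Matrix.single q s 1) : Matrix S Q' ℂ)).trace := by
      intro M
      conv_lhs => rw [Matrix.matrix_eq_sum_single M]
      simp only [map_sum, Matrix.trace, Matrix.diag, Matrix.mul_apply, Matrix.of_apply]
      refine Finset.sum_congr rfl fun q _ => Finset.sum_congr rfl fun s _ => ?_
      have : Matrix.single q s (M q s) = M q s • Matrix.single q s (1 : ℂ) := by
        simp [Matrix.smul_single]
      rw [this, map_smul, smul_eq_mul]
    have h0 : (Matrix.of fun s q => f (Matrix.single q s 1) : Matrix S Q' ℂ) = 0 := by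
      apply hAR
      funext k
      have : f (AR k) = 0 := hle (Submodule.subset_span ⟨k, rfl⟩)
      simp only [← key, this]
      simp
    ext1 M
    rw [key, h0]
    simp
  have : M ∈ Submodule.span ℂ (Set.range AR) := htop ▸ Submodule.mem_top
  exact (Submodule.mem_span_range_iff_exists_fun ℂ).mp this


/-- Fundamental Lemma, right version: given injective MPS tensors `A_L`, `A_R`,
a left-injective tensor `B`, a nonzero closure tensor `X`, and invertible
`R`, `U_R` with the symmetry property for the three-site state `Ψ`, there is
a unique matrix `V_R` with `∑ j', R j j' • B j' = B j * V_R` for all `j`, and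
this `V_R` is invertible. -/
theorem fundamental_lemma_right
    {dL dB dR dX P Q Q' S : Type*}
    [Fintype dL] [Fintype dB] [Fintype dR] [Fintype dX]
    [Fintype P] [Fintype Q] [Fintype Q'] [Fintype S]
    [DecidableEq Q'] [DecidableEq dR] [DecidableEq dB]
    (AL : dL → Matrix P Q ℂ) (AR : dR → Matrix Q' S ℂ)
    (B : dB → Matrix Q Q' ℂ) (X : dX → Matrix S P ℂ)
    (hAL : Function.Injective fun Y : Matrix Q P ℂ => fun i : dL => (AL i * Y).trace)
    (hAR : Function.Injective fun Y : Matrix S Q' ℂ => fun k : dR => (AR k * Y).trace)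
    (hB : ∀ v : Q' → ℂ, (∀ j, B j *ᵥ v = 0) → v = 0)
    (hX : ∃ a, X a ≠ 0)
    (UR : Matrix dR dR ℂ) (R : Matrix dB dB ℂ)
    (hUR : IsUnit UR) (hR : IsUnit R)
    (hsym : ∀ i j k a,
      (∑ j', ∑ k', R j j' * UR k k' * (AL i * B j' * AR k' * X a).trace) =
        (AL i * B j * AR k * X a).trace) :
    ∃ VR : Matrix Q' Q' ℂ,
      (∀ j, (∑ j', R j j' • B j') = B j * VR) ∧ IsUnit VR ∧
        ∀ VR' : Matrix Q' Q' ℂ, (∀ j, (∑ j', R j j' • B j') = B j * VR') → VR' = VR := by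
  classical
  obtain ⟨a, ha⟩ := hX
  obtain ⟨s, p, hsp⟩ : ∃ s p, X a s p ≠ 0 := by
    by_contra! h
    exact ha (by ext s p; simpa using h s p)
  have h1 : ∀ j k, (∑ j', R j j' • B j') * (∑ k', UR k k' • AR k') * X a = B j * AR k * X a := by
    intro j k
    apply hAL
    funext i
    have := hsym i j k a
    simp only [← Matrix.mul_assoc]
    rw [← this]
    simp only [Matrix.mul_sum, Matrix.sum_mul, Matrix.trace_sum, Matrix.mul_smul,
      Matrix.smul_mul, Matrix.trace_smul, smul_eq_mul, ← Matrix.mul_assoc, Finset.mul_sum, mul_assoc]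
    try rw [Finset.sum_comm]
    try simp only [mul_left_comm]
  have h2 : ∀ q : Q', ∃ c : dR → ℂ,
      ∑ k, c k • (∑ k', UR k k' • AR k') = Matrix.single q s (1 : ℂ) := by
    intro q
    obtain ⟨c, hc⟩ := aux_span AR hAR (Matrix.single q s (1 : ℂ))
    refine ⟨c ᵥ* UR⁻¹, ?_⟩
    have hu : (c ᵥ* UR⁻¹) ᵥ* UR = c := by
      rw [Matrix.vecMul_vecMul, Matrix.nonsing_inv_mul _ ((Matrix.isUnit_iff_isUnit_det _).mp hUR),
        Matrix.vecMul_one]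
    rw [← hc]
    conv_rhs => rw [← hu]
    simp only [Finset.smul_sum, smul_smul]
    rw [Finset.sum_comm]
    refine Finset.sum_congr rfl fun k _ => ?_
    rw [← Finset.sum_smul]
    rfl
  choose c hc using h2
  have inj : ∀ v : Q' → ℂ, (∀ j, (∑ j', R j j' • B j') *ᵥ v = 0) → v = 0 := by
    intro v hv
    apply hB
    intro j
    have hu : R⁻¹ * R = 1 :=
      Matrix.nonsing_inv_mul _ ((Matrix.isUnit_iff_isUnit_det _).mp hR)
    have hb : ∑ l, R⁻¹ j l • (∑ j', R l j' • B j') = B j := by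
      simp only [Finset.smul_sum, smul_smul]
      rw [Finset.sum_comm]
      simp only [← Finset.sum_smul, ← Matrix.mul_apply, hu, Matrix.one_apply]
      simp
    rw [← hb, Matrix.sum_mulVec]
    refine Finset.sum_eq_zero fun l _ => ?_
    rw [Matrix.smul_mulVec, hv l, smul_zero]
  let V : Matrix Q' Q' ℂ := Matrix.of fun q' q =>
    (X a s p)⁻¹ * ((∑ k, c q k • AR k) * X a) q' p
  have hV : ∀ j, (∑ j', R j j' • B j') = B j * V := by
    intro j
    ext r q
    have e : B j * ((∑ k, c q k • AR k) * X a)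
        = (∑ j', R j j' • B j') * Matrix.single q s (1 : ℂ) * X a := by
      rw [← hc q, Matrix.mul_sum _ _ (∑ j', R j j' • B j'), Matrix.sum_mul, Matrix.sum_mul,
        Matrix.mul_sum]
      refine Finset.sum_congr rfl fun k _ => ?_
      rw [Matrix.mul_smul, Matrix.smul_mul, Matrix.smul_mul, h1 j k]
      simp [Matrix.mul_assoc]
    have e2 := congrFun (congrFun e r) p
    have e3 : ((∑ j', R j j' • B j') * Matrix.single q s (1 : ℂ) * X a) r p
        = (∑ j', R j j' • B j') r q * X a s p := by
      rw [Matrix.mul_apply, Finset.sum_eq_single s]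
      · simp
      · intro t _ ht
        rw [Matrix.mul_single_apply_of_ne _ _ _ _ _ ht, zero_mul]
      · simp
    rw [e3] at e2
    have e4 : (B j * V) r q = (X a s p)⁻¹ * (B j * ((∑ k, c q k • AR k) * X a)) r p := by
      rw [Matrix.mul_apply, Matrix.mul_apply, Finset.mul_sum]
      refine Finset.sum_congr rfl fun t _ => ?_
      simp only [V, Matrix.of_apply]
      ring
    rw [e4, e2]
    field_simp
  refine ⟨V, hV, ?_, ?_⟩
  · rw [← Matrix.mulVec_injective_iff_isUnit]
    intro v w hvw
    rw [← sub_eq_zero]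
    apply inj
    intro j
    have hvw' : V *ᵥ v = V *ᵥ w := hvw
    rw [hV j, ← Matrix.mulVec_mulVec, Matrix.mulVec_sub, hvw', sub_self, Matrix.mulVec_zero]
  · intro W hW
    rw [← sub_eq_zero]
    ext q' q
    have : (W - V) *ᵥ Pi.single q 1 = 0 := by
      apply hB
      intro j
      rw [Matrix.mulVec_mulVec, Matrix.mul_sub, ← hW j, ← hV j, sub_self, Matrix.zero_mulVec]
    simpa using congrFun this q'
end

section
/- The virtual operators solving the intertwiner relation form a representation: let G be a group, B : d_B → Matrix Q Q' ℂ a right-injective MPS tensor, L : G → Matrix d_B d_B ℂ a representation (L(g*h) = L(g) * L(h), L(1) = 1, each L(g) invertible), and V : G → Matrix Q Q ℂ a family of invertible matrices such that for every g ∈ G and every j : d_B, ∑_{j'} (L(g) j j') • B j' = (V g)⁻¹ * B j. Then V is a group homomorphism into the invertible matrices: V(g*h) = V(g) * V(h) for all g, h ∈ G and V(1) = 1. -/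
open Matrix

/-- The virtual operators solving the intertwiner relation form a representation:
if `B` is right-injective, `L` is a representation on the physical index, and the
invertible matrices `V g` satisfy `∑ j', L g j j' • B j' = (V g)⁻¹ * B j`, then
`V` is multiplicative and unital. -/
theorem virtual_operators_form_representation
    {G : Type*} [Group G] {dB Q Q' : Type*}
    [Fintype dB] [Fintype Q] [Fintype Q'] [DecidableEq dB] [DecidableEq Q]
    (B : dB → Matrix Q Q' ℂ)
    (hB : ∀ w : Q → ℂ, (∀ j, w ᵥ* B j = 0) → w = 0)
    (L : G → Matrix dB dB ℂ)
    (hL1 : L 1 = 1)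
    (hLmul : ∀ g h, L (g * h) = L g * L h)
    (hLunit : ∀ g, IsUnit (L g))
    (V : G → Matrix Q Q ℂ)
    (hVunit : ∀ g, IsUnit (V g))
    (hint : ∀ g j, (∑ j', L g j j' • B j') = (V g)⁻¹ * B j) :
    (∀ g h, V (g * h) = V g * V h) ∧ V 1 = 1 := by
  have key : ∀ X Y : Matrix Q Q ℂ, (∀ j, X * B j = Y * B j) → X = Y := by
    intro X Y h
    ext a b
    have h0 : (X - Y) a = 0 := by
      apply hB
      intro j
      have h1 : (X - Y) * B j = 0 := by rw [Matrix.sub_mul, h j, sub_self]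
      ext c
      exact congrFun (congrFun h1 a) c
    have h2 := congrFun h0 b
    simpa [sub_eq_zero] using h2
  have inj : ∀ X Y : Matrix Q Q ℂ, IsUnit X → IsUnit Y → X⁻¹ = Y⁻¹ → X = Y := by
    intro X Y hX hY h
    rw [← Matrix.nonsing_inv_nonsing_inv X ((Matrix.isUnit_iff_isUnit_det X).1 hX), h,
      Matrix.nonsing_inv_nonsing_inv Y ((Matrix.isUnit_iff_isUnit_det Y).1 hY)]
  refine ⟨fun g h => ?_, ?_⟩
  · apply inj _ _ (hVunit _) ((hVunit g).mul (hVunit h))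
    apply key
    intro j
    rw [Matrix.mul_inv_rev, Matrix.mul_assoc, ← hint g j, ← hint (g * h) j, hLmul,
      Matrix.mul_sum]
    simp_rw [Matrix.mul_smul, ← hint h, Finset.smul_sum, Matrix.mul_apply, Finset.sum_smul,
      smul_smul]
    exact Finset.sum_comm
  · apply inj _ _ (hVunit _) isUnit_one
    apply key
    intro j
    rw [← hint 1 j, hL1]
    simp [Matrix.one_apply]
end
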